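/- (Expected excess risk of ERM via the shatter coefficient.) Let 𝒳 be a measurable space, K ≥ 2, and F a countable class of measurable classifiers f : 𝒳 → {1,…,K}. Let (X_1, Y_1),…,(X_n, Y_n) be i.i.d. draws from a probability measure P on 𝒳 × {1,…,K}, let R(f) = P({(x,y) : f(x) ≠ y}), and suppose some f° ∈ F attains inf_{f ∈ F} R(f). Let f̂ ∈ argmin_{f ∈ F} (1/n) Σ_{i=1}^n 1{f(X_i) ≠ Y_i} be an empirical risk minimizer (assumed to exist and be suitably measurable). Then E[ R(f̂) − R(f°) ] ≤ 16·√( log(8e·S(F, n)) / (2n) ). -/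

import Mathlib

open MeasureTheory

noncomputable section

/-- The `n`-th (multiclass) shatter coefficient `S(F, n)`: the maximum, over points
`x_1, …, x_n`, of the number of distinct value vectors `(f(x_1), …, f(x_n))`, `f ∈ F`. -/
def shatterCoeff {X : Type*} {K : ℕ} (F : Set (X → Fin K)) (n : ℕ) : ℕ :=
  sSup {m : ℕ | ∃ xs : Fin n → X,
    m = Nat.card {v : Fin n → Fin K // ∃ f ∈ F, ∀ i, f (xs i) = v i}}

/-!
The excess risk of an empirical risk minimizer is at most the supremum over `f ∈ F` of the
difference between the risk and the empirical risk of `f`, plus a term of mean zero. Replacing the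
risks by empirical risks on an independent ghost sample, and then swapping each pair of matching
points of the two samples according to a random sign, bounds the mean of this supremum by twice a
Rademacher average of the losses. On a fixed sample the losses take at most `S(F, n)` values as
vectors, all of squared norm at most `n`, so Massart's finite class lemma, which bounds exponential
moments of a maximum by the sum of the individual ones, gives at most `√(2 n log S(F, n))`.
-/

open scoped BigOperators

section Massart

variable {ι κ : Type*} [Fintype ι]

/-- The supremum of the signed sums `∑ i, σ i * a k i` over the index `k`, with the signs
encoded as units of `ℤ`. -/
def signedSup (a : κ → ι → ℝ) (σ : ι → ℤˣ) : ℝ :=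
  ⨆ k, ∑ i, ((σ i : ℤ) : ℝ) * a k i

/-- The Rademacher average of the vectors `a k`, the mean of `signedSup a σ` over all sign
vectors `σ`, not normalized by the number of coordinates. -/
def rademacherAverage [DecidableEq ι] (a : κ → ι → ℝ) : ℝ :=
  𝔼 σ : ι → ℤˣ, signedSup a σ

lemma exp_expect_le_expect_exp [Nonempty ι] (f : ι → ℝ) :
    Real.exp (𝔼 i, f i) ≤ 𝔼 i, Real.exp (f i) := by
  simpa [Fintype.expect_eq_sum_div_card, div_eq_inv_mul, Finset.mul_sum] using
    convexOn_exp.map_sum_le (t := Finset.univ) (w := fun _ => (Fintype.card ι : ℝ)⁻¹) (p := f)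
      (fun _ _ => by positivity) (by simp) (fun _ _ => Set.mem_univ _)

lemma expect_prod_pi [DecidableEq ι] {α : Type*} [Fintype α] (f : ι → α → ℝ) :
    𝔼 s : ι → α, ∏ i, f i (s i) = ∏ i, 𝔼 x, f i x := by
  simp_rw [Fintype.expect_eq_sum_div_card, Finset.prod_div_distrib, Finset.prod_univ_sum,
    Fintype.piFinset_univ]
  simp

lemma expect_exp_sign_mul_le (x : ℝ) :
    𝔼 ε : ℤˣ, Real.exp (((ε : ℤ) : ℝ) * x) ≤ Real.exp (x ^ 2 / 2) := by
  calc 𝔼 ε : ℤˣ, Real.exp (((ε : ℤ) : ℝ) * x) = Real.cosh x := by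
        rw [Fintype.expect_eq_sum_div_card, Real.cosh_eq]
        simp [UnitsInt.univ]
    _ ≤ Real.exp (x ^ 2 / 2) := Real.cosh_le_exp_half_sq x

lemma expect_exp_signed_sum_le [DecidableEq ι] (b : ι → ℝ) :
    𝔼 σ : ι → ℤˣ, Real.exp (∑ i, ((σ i : ℤ) : ℝ) * b i) ≤ Real.exp ((∑ i, b i ^ 2) / 2) := by
  simp_rw [Finset.sum_div, Real.exp_sum]
  rw [expect_prod_pi fun i (ε : ℤˣ) => Real.exp (((ε : ℤ) : ℝ) * b i)]
  exact Finset.prod_le_prod (fun i _ => Finset.expect_nonneg fun _ _ => (Real.exp_pos _).le)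
    fun i _ => expect_exp_sign_mul_le (b i)

variable [Nonempty κ] {a : κ → ι → ℝ}

lemma exp_mul_signedSup_le_sum (ha : (Set.range a).Finite) (t : ℝ) (σ : ι → ℤˣ) :
    Real.exp (t * signedSup a σ) ≤
      ∑ b ∈ ha.toFinset, Real.exp (∑ i, ((σ i : ℤ) : ℝ) * (t * b i)) := by
  have hfin : (Set.range fun k => ∑ i, ((σ i : ℤ) : ℝ) * a k i).Finite := by
    simpa only [← Set.range_comp, Function.comp_def] using
      ha.image fun b => ∑ i, ((σ i : ℤ) : ℝ) * b i
  obtain ⟨k, hk⟩ := (Set.range_nonempty _).csSup_mem hfin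
  have attained : t * signedSup a σ = ∑ i, ((σ i : ℤ) : ℝ) * (t * a k i) := by
    rw [signedSup, iSup, ← hk, Finset.mul_sum]
    exact Finset.sum_congr rfl fun i _ => mul_left_comm _ _ _
  rw [attained]
  exact Finset.single_le_sum (f := fun b => Real.exp (∑ i, ((σ i : ℤ) : ℝ) * (t * b i)))
    (fun _ _ => (Real.exp_pos _).le) (ha.mem_toFinset.2 ⟨k, rfl⟩)

lemma exp_mul_rademacherAverage_le [DecidableEq ι] (ha : (Set.range a).Finite) {v : ℝ}
    (hv : ∀ k, ∑ i, a k i ^ 2 ≤ v) (t : ℝ) :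
    Real.exp (t * rademacherAverage a) ≤ (Set.range a).ncard * Real.exp (t ^ 2 * v / 2) := by
  have mgf_le (b : ι → ℝ) (hb : b ∈ ha.toFinset) :
      𝔼 σ : ι → ℤˣ, Real.exp (∑ i, ((σ i : ℤ) : ℝ) * (t * b i)) ≤ Real.exp (t ^ 2 * v / 2) := by
    obtain ⟨k, rfl⟩ := ha.mem_toFinset.1 hb
    refine (expect_exp_signed_sum_le fun i => t * a k i).trans (Real.exp_le_exp.2 ?_)
    simp_rw [mul_pow, ← Finset.mul_sum]
    gcongr
    exact hv k
  calc Real.exp (t * rademacherAverage a)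
      ≤ 𝔼 σ, Real.exp (t * signedSup a σ) := by
        rw [rademacherAverage, Finset.mul_expect]
        exact exp_expect_le_expect_exp _
    _ ≤ 𝔼 σ : ι → ℤˣ, ∑ b ∈ ha.toFinset, Real.exp (∑ i, ((σ i : ℤ) : ℝ) * (t * b i)) :=
        Finset.expect_le_expect fun σ _ => exp_mul_signedSup_le_sum ha t σ
    _ = ∑ b ∈ ha.toFinset, 𝔼 σ : ι → ℤˣ, Real.exp (∑ i, ((σ i : ℤ) : ℝ) * (t * b i)) :=
        Finset.expect_sum_comm _ _ _
    _ ≤ ∑ _b ∈ ha.toFinset, Real.exp (t ^ 2 * v / 2) := Finset.sum_le_sum mgf_le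
    _ = (Set.range a).ncard * Real.exp (t ^ 2 * v / 2) := by
        rw [Finset.sum_const, nsmul_eq_mul, Set.ncard_eq_toFinset_card _ ha]

theorem rademacherAverage_le_sqrt [DecidableEq ι] (ha : (Set.range a).Finite) {v : ℝ}
    (hv : ∀ k, ∑ i, a k i ^ 2 ≤ v) :
    rademacherAverage a ≤ √(2 * v * Real.log (Set.range a).ncard) := by
  have hN : (0 : ℝ) < (Set.range a).ncard := by
    exact_mod_cast (Set.ncard_pos ha).2 (Set.range_nonempty a)
  -- Using all `t` at once avoids choosing an optimal one, which does not exist when `v = 0`.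
  have quadratic (t : ℝ) :
      0 ≤ v / 2 * (t * t) + -rademacherAverage a * t + Real.log (Set.range a).ncard := by
    have := Real.log_le_log (Real.exp_pos _) (exp_mul_rademacherAverage_le ha hv t)
    rw [Real.log_exp, Real.log_mul hN.ne' (Real.exp_pos _).ne', Real.log_exp] at this
    linarith
  have := discrim_le_zero quadratic
  rw [discrim] at this
  exact Real.le_sqrt_of_sq_le (by linarith)

end Massart

section Bounded

variable {ι κ : Type*} [Fintype ι] {a b : κ → ι → ℝ} {C D : ℝ}

lemma abs_signed_sum_le (ha : ∀ k i, |a k i| ≤ C) (σ : ι → ℤˣ) (k : κ) :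
    |∑ i, ((σ i : ℤ) : ℝ) * a k i| ≤ Fintype.card ι * C := by
  calc |∑ i, ((σ i : ℤ) : ℝ) * a k i| ≤ ∑ i, |((σ i : ℤ) : ℝ) * a k i| :=
        Finset.abs_sum_le_sum_abs _ _
    _ = ∑ i, |a k i| := by
        simp only [abs_mul, ← Int.cast_abs, Int.isUnit_iff_abs_eq.1 (σ _).isUnit,
          Int.cast_one, one_mul]
    _ ≤ ∑ _i : ι, C := Finset.sum_le_sum fun i _ => ha k i
    _ = Fintype.card ι * C := by simp

lemma signed_sum_le_signedSup (ha : ∀ k i, |a k i| ≤ C) (σ : ι → ℤˣ) (k : κ) :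
    ∑ i, ((σ i : ℤ) : ℝ) * a k i ≤ signedSup a σ :=
  le_ciSup (f := fun k => ∑ i, ((σ i : ℤ) : ℝ) * a k i)
    ⟨Fintype.card ι * C, Set.forall_mem_range.2 fun k => (abs_le.1 (abs_signed_sum_le ha σ k)).2⟩ k

variable [Nonempty κ]

lemma abs_signedSup_le (ha : ∀ k i, |a k i| ≤ C) (σ : ι → ℤˣ) :
    |signedSup a σ| ≤ Fintype.card ι * C := by
  obtain ⟨k⟩ := ‹Nonempty κ›
  exact abs_le.2 ⟨(abs_le.1 (abs_signed_sum_le ha σ k)).1.trans (signed_sum_le_signedSup ha σ k),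
    ciSup_le fun k => (abs_le.1 (abs_signed_sum_le ha σ k)).2⟩

lemma signedSup_sub_le (ha : ∀ k i, |a k i| ≤ C) (hb : ∀ k i, |b k i| ≤ D) (σ : ι → ℤˣ) :
    signedSup (a - b) σ ≤ signedSup a σ + signedSup b (-σ) := by
  refine ciSup_le fun k => ?_
  calc ∑ i, ((σ i : ℤ) : ℝ) * (a - b) k i
      = ∑ i, ((σ i : ℤ) : ℝ) * a k i + ∑ i, (((-σ) i : ℤ) : ℝ) * b k i := by
        simp [mul_sub, Finset.sum_sub_distrib, ← sub_eq_add_neg]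
    _ ≤ signedSup a σ + signedSup b (-σ) :=
        add_le_add (signed_sum_le_signedSup ha σ k) (signed_sum_le_signedSup hb (-σ) k)

lemma integrable_signedSup {Ω : Type*} [MeasurableSpace Ω] {ν : Measure Ω} [IsFiniteMeasure ν]
    [Countable κ] {a : Ω → κ → ι → ℝ} (hm : ∀ k i, Measurable fun ω => a ω k i)
    (ha : ∀ ω k i, |a ω k i| ≤ C) (σ : ι → ℤˣ) :
    Integrable (fun ω => signedSup (a ω) σ) ν := by
  refine .of_bound (Measurable.aestronglyMeasurable ?_) (Fintype.card ι * C)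
    (.of_forall fun ω => abs_signedSup_le (ha ω) σ)
  exact Measurable.iSup fun k => Finset.measurable_sum _ fun i _ => (hm k i).const_mul _

end Bounded

section Symmetrization

lemma abs_integral_sub_le {Z : Type*} [MeasurableSpace Z] {ν : Measure Z} [IsProbabilityMeasure ν]
    {h : Z → ℝ} {C : ℝ} (hC : ∀ x, |h x| ≤ C) (x : Z) : |∫ y, h y ∂ν - h x| ≤ C + C := by
  have : |∫ y, h y ∂ν| ≤ C := by
    simpa using norm_integral_le_of_norm_le_const (μ := ν) (f := h) (.of_forall hC)
  exact (abs_sub _ _).trans (add_le_add this (hC x))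

variable {ι κ Z : Type*} [Fintype ι]

/-- The matrix of values `g k (z i)` of the functions `g k` at the sample points `z i`. -/
def sampleValues (g : κ → Z → ℝ) (z : ι → Z) : κ → ι → ℝ := fun k i => g k (z i)

/-- The supremum over `k` of the signed sums of the increments `g k (w i).2 - g k (w i).1` from
the sample `Prod.fst ∘ w` to the ghost sample `Prod.snd ∘ w`. -/
def ghostSup (g : κ → Z → ℝ) (σ : ι → ℤˣ) (w : ι → Z × Z) : ℝ :=
  signedSup (sampleValues g (Prod.snd ∘ w) - sampleValues g (Prod.fst ∘ w)) σ

lemma ghostSup_one_swap (g : κ → Z → ℝ) (σ : ι → ℤˣ) (w : ι → Z × Z) :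
    ghostSup g 1 (fun i => if σ i = 1 then w i else (w i).swap) = ghostSup g σ w := by
  refine iSup_congr fun k => Finset.sum_congr rfl fun i _ => ?_
  rcases Int.units_eq_one_or (σ i) with h | h <;> simp [sampleValues, h]

variable [MeasurableSpace Z]

/-- The largest amount `⨆ k, ∑ i, (∫ g k ∂μ i - g k (z i))` by which the means of the functions
`g k` exceed their values on the sample `z`, not normalized by the sample size. -/
def uniformDeviation (μ : ι → Measure Z) (g : κ → Z → ℝ) (z : ι → Z) : ℝ :=
  ⨆ k, ∑ i, (∫ x, g k x ∂μ i - g k (z i))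

lemma uniformDeviation_eq_signedSup (μ : ι → Measure Z) (g : κ → Z → ℝ) (z : ι → Z) :
    uniformDeviation μ g z = signedSup (fun k i => ∫ x, g k x ∂μ i - g k (z i)) 1 := by
  simp [uniformDeviation, signedSup]

variable {μ : ι → Measure Z} [∀ i, IsProbabilityMeasure (μ i)] {g : κ → Z → ℝ} {C : ℝ}

lemma sum_integral_sub_le_uniformDeviation (hC : ∀ k x, |g k x| ≤ C) (z : ι → Z) (k : κ) :
    ∑ i, (∫ x, g k x ∂μ i - g k (z i)) ≤ uniformDeviation μ g z := by
  simpa [uniformDeviation_eq_signedSup] using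
    signed_sum_le_signedSup (fun k i => abs_integral_sub_le (ν := μ i) (hC k) (z i)) 1 k

lemma integral_sum_comp_eval {h : Z → ℝ} (hh : ∀ i, Integrable h (μ i)) :
    ∫ z, ∑ i, h (z i) ∂Measure.pi μ = ∑ i, ∫ x, h x ∂μ i := by
  rw [integral_finsetSum _ fun i _ => integrable_comp_eval (hh i)]
  exact Finset.sum_congr rfl fun i _ => integral_comp_eval (hh i).aestronglyMeasurable

variable [Countable κ] [Nonempty κ]

lemma integrable_uniformDeviation (hg : ∀ k, Measurable (g k)) (hC : ∀ k x, |g k x| ≤ C) :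
    Integrable (uniformDeviation μ g) (Measure.pi μ) := by
  have hbound (z : ι → Z) (k : κ) (i : ι) : |∫ x, g k x ∂μ i - g k (z i)| ≤ C + C :=
    abs_integral_sub_le (hC k) (z i)
  simp_rw [funext (uniformDeviation_eq_signedSup μ g)]
  exact integrable_signedSup (fun k i => ((hg k).comp (measurable_pi_apply i)).const_sub _)
    hbound 1

lemma integrable_signedSup_sampleValues (hg : ∀ k, Measurable (g k)) (hC : ∀ k x, |g k x| ≤ C)
    (σ : ι → ℤˣ) :
    Integrable (fun z => signedSup (sampleValues g z) σ) (Measure.pi μ) :=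
  integrable_signedSup (fun k i => (hg k).comp (measurable_pi_apply i)) (fun _ k _ => hC k _) σ

lemma integrable_ghostSup (hg : ∀ k, Measurable (g k)) (hC : ∀ k x, |g k x| ≤ C)
    (σ : ι → ℤˣ) : Integrable (ghostSup g σ) (Measure.pi fun i => (μ i).prod (μ i)) := by
  refine integrable_signedSup (C := C + C) (fun k i => ?_) (fun w k i => ?_) σ
  · exact ((hg k).comp (measurable_pi_apply i).snd).sub ((hg k).comp (measurable_pi_apply i).fst)
  · exact (abs_sub _ _).trans (add_le_add (hC k _) (hC k _))

lemma uniformDeviation_le_integral_signedSup (hg : ∀ k, Measurable (g k))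
    (hC : ∀ k x, |g k x| ≤ C) (z : ι → Z) :
    uniformDeviation μ g z ≤
      ∫ z', signedSup (sampleValues g z' - sampleValues g z) 1 ∂Measure.pi μ := by
  have hbound (z' : ι → Z) (k : κ) (i : ι) :
      |(sampleValues g z' - sampleValues g z) k i| ≤ C + C :=
    (abs_sub _ _).trans (add_le_add (hC k _) (hC k _))
  have hint (k : κ) (i : ι) : Integrable (g k) (μ i) :=
    .of_bound (hg k).aestronglyMeasurable C (.of_forall (hC k))
  have hsum (k : κ) : Integrable (fun z' => ∑ i, g k (z' i)) (Measure.pi μ) :=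
    integrable_finsetSum _ fun i _ => integrable_comp_eval (hint k i)
  refine ciSup_le fun k => ?_
  calc ∑ i, (∫ x, g k x ∂μ i - g k (z i))
      = ∫ z', (∑ i, g k (z' i) - ∑ i, g k (z i)) ∂Measure.pi μ := by
        rw [integral_sub (hsum k) (integrable_const _), integral_sum_comp_eval (hint k)]
        simp
    _ ≤ ∫ z', signedSup (sampleValues g z' - sampleValues g z) 1 ∂Measure.pi μ := by
        refine integral_mono ((hsum k).sub (integrable_const _))
          (integrable_signedSup (fun k i => ((hg k).comp (measurable_pi_apply i)).sub_const _)
            hbound 1) fun z' => ?_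
        simpa [sampleValues] using signed_sum_le_signedSup (hbound z') 1 k

lemma integral_uniformDeviation_le_integral_ghostSup (hg : ∀ k, Measurable (g k))
    (hC : ∀ k x, |g k x| ≤ C) :
    ∫ z, uniformDeviation μ g z ∂Measure.pi μ ≤
      ∫ w, ghostSup g 1 w ∂Measure.pi fun i => (μ i).prod (μ i) := by
  let e := MeasurableEquiv.arrowProdEquivProdArrow Z Z ι
  have he : MeasurePreserving e.symm ((Measure.pi μ).prod (Measure.pi μ))
      (Measure.pi fun i => (μ i).prod (μ i)) :=
    (measurePreserving_arrowProdEquivProdArrow Z Z ι μ μ).symm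
  have hint : Integrable (fun q => ghostSup g 1 (e.symm q)) ((Measure.pi μ).prod (Measure.pi μ)) :=
    he.integrable_comp_of_integrable (integrable_ghostSup hg hC 1)
  calc ∫ z, uniformDeviation μ g z ∂Measure.pi μ
      ≤ ∫ z, ∫ z', ghostSup g 1 (e.symm (z, z')) ∂Measure.pi μ ∂Measure.pi μ :=
        integral_mono (integrable_uniformDeviation hg hC) hint.integral_prod_left
          (uniformDeviation_le_integral_signedSup hg hC)
    _ = ∫ w, ghostSup g 1 w ∂Measure.pi fun i => (μ i).prod (μ i) := by
        rw [← he.integral_comp', integral_prod _ hint]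

lemma integral_ghostSup_eq (hg : ∀ k, Measurable (g k)) (hC : ∀ k x, |g k x| ≤ C)
    (σ : ι → ℤˣ) :
    ∫ w, ghostSup g σ w ∂(Measure.pi fun i => (μ i).prod (μ i)) =
      ∫ w, ghostSup g 1 w ∂(Measure.pi fun i => (μ i).prod (μ i)) := by
  have hswap : MeasurePreserving
      (fun (w : ι → Z × Z) i => if σ i = 1 then w i else (w i).swap)
      (Measure.pi fun i => (μ i).prod (μ i)) (Measure.pi fun i => (μ i).prod (μ i)) := by
    refine measurePreserving_pi (fun i => (μ i).prod (μ i)) (fun i => (μ i).prod (μ i))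
      (f := fun i (p : Z × Z) => if σ i = 1 then p else p.swap) fun i => ?_
    split_ifs
    · exact .id _
    · exact Measure.measurePreserving_swap
  simpa only [Function.comp_def, ghostSup_one_swap] using
    hswap.hasLaw.integral_comp (integrable_ghostSup hg hC 1).1

lemma integral_ghostSup_le (hg : ∀ k, Measurable (g k)) (hC : ∀ k x, |g k x| ≤ C)
    (σ : ι → ℤˣ) :
    ∫ w, ghostSup g σ w ∂(Measure.pi fun i => (μ i).prod (μ i)) ≤
      ∫ z, signedSup (sampleValues g z) σ ∂Measure.pi μ +
        ∫ z, signedSup (sampleValues g z) (-σ) ∂Measure.pi μ := by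
  have hfst : MeasurePreserving (fun w : ι → Z × Z => Prod.fst ∘ w)
      (Measure.pi fun i => (μ i).prod (μ i)) (Measure.pi μ) :=
    measurePreserving_pi _ μ fun _ => measurePreserving_fst
  have hsnd : MeasurePreserving (fun w : ι → Z × Z => Prod.snd ∘ w)
      (Measure.pi fun i => (μ i).prod (μ i)) (Measure.pi μ) :=
    measurePreserving_pi _ μ fun _ => measurePreserving_snd
  have hint (τ : ι → ℤˣ) := integrable_signedSup_sampleValues (μ := μ) hg hC τ
  have hint_fst := hfst.integrable_comp_of_integrable (hint (-σ))
  have hint_snd := hsnd.integrable_comp_of_integrable (hint σ)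
  calc ∫ w, ghostSup g σ w ∂(Measure.pi fun i => (μ i).prod (μ i))
      ≤ ∫ w, (signedSup (sampleValues g (Prod.snd ∘ w)) σ +
          signedSup (sampleValues g (Prod.fst ∘ w)) (-σ))
            ∂(Measure.pi fun i => (μ i).prod (μ i)) :=
        integral_mono (integrable_ghostSup hg hC σ) (hint_snd.add hint_fst) fun w =>
          signedSup_sub_le (fun k _ => hC k _) (fun k _ => hC k _) σ
    _ = _ :=
        (integral_add hint_snd hint_fst).trans <|
          congrArg₂ (· + ·) (hsnd.hasLaw.integral_comp (hint σ).1)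
            (hfst.hasLaw.integral_comp (hint (-σ)).1)

lemma integrable_rademacherAverage [DecidableEq ι] (hg : ∀ k, Measurable (g k))
    (hC : ∀ k x, |g k x| ≤ C) :
    Integrable (fun z => rademacherAverage (sampleValues g z)) (Measure.pi μ) := by
  simp_rw [rademacherAverage, Fintype.expect_eq_sum_div_card]
  exact (integrable_finsetSum _ fun σ _ =>
    integrable_signedSup_sampleValues hg hC σ).div_const _

lemma integral_rademacherAverage [DecidableEq ι] (hg : ∀ k, Measurable (g k))
    (hC : ∀ k x, |g k x| ≤ C) :
    ∫ z, rademacherAverage (sampleValues g z) ∂Measure.pi μ =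
      𝔼 σ : ι → ℤˣ, ∫ z, signedSup (sampleValues g z) σ ∂Measure.pi μ := by
  simp_rw [rademacherAverage, Fintype.expect_eq_sum_div_card]
  rw [integral_div, integral_finsetSum _ fun σ _ => integrable_signedSup_sampleValues hg hC σ]

theorem integral_uniformDeviation_le_two_mul_integral_rademacherAverage [DecidableEq ι]
    (hg : ∀ k, Measurable (g k)) (hC : ∀ k x, |g k x| ≤ C) :
    ∫ z, uniformDeviation μ g z ∂Measure.pi μ ≤
      2 * ∫ z, rademacherAverage (sampleValues g z) ∂Measure.pi μ := by
  let r (σ : ι → ℤˣ) : ℝ := ∫ z, signedSup (sampleValues g z) σ ∂Measure.pi μ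
  have le_of_signs (σ : ι → ℤˣ) : ∫ z, uniformDeviation μ g z ∂Measure.pi μ ≤ r σ + r (-σ) :=
    (integral_uniformDeviation_le_integral_ghostSup hg hC).trans <|
      (integral_ghostSup_eq hg hC σ).ge.trans (integral_ghostSup_le hg hC σ)
  calc ∫ z, uniformDeviation μ g z ∂Measure.pi μ ≤ 𝔼 σ, (r σ + r (-σ)) :=
        Finset.le_expect Finset.univ_nonempty fun σ _ => le_of_signs σ
    _ = 2 * 𝔼 σ, r σ := by
        rw [Finset.expect_add_distrib, Fintype.expect_equiv (Equiv.neg _) (fun σ => r (-σ)) r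
          fun _ => rfl, two_mul]
    _ = 2 * ∫ z, rademacherAverage (sampleValues g z) ∂Measure.pi μ := by
        rw [integral_rademacherAverage hg hC]

end Symmetrization

section EmpiricalRiskMinimization

variable {ι κ Z : Type*} [Fintype ι] [MeasurableSpace Z] {μ : ι → Measure Z}
  [∀ i, IsProbabilityMeasure (μ i)] {g : κ → Z → ℝ} {C : ℝ}

lemma sum_excess_le_uniformDeviation_add (hC : ∀ k x, |g k x| ≤ C) {z : ι → Z} {j k : κ}
    (hk : ∑ i, g k (z i) ≤ ∑ i, g j (z i)) :
    ∑ i, (∫ x, g k x ∂μ i - ∫ x, g j x ∂μ i) ≤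
      uniformDeviation μ g z + (∑ i, g j (z i) - ∑ i, ∫ x, g j x ∂μ i) := by
  have := sum_integral_sub_le_uniformDeviation (μ := μ) hC z k
  simp only [Finset.sum_sub_distrib] at this ⊢
  linarith

lemma integral_sum_excess_le_integral_uniformDeviation [Countable κ]
    (hg : ∀ k, Measurable (g k)) (hC : ∀ k x, |g k x| ≤ C) {j : κ} {khat : (ι → Z) → κ}
    (hkhat : ∀ z, ∑ i, g (khat z) (z i) ≤ ∑ i, g j (z i))
    (hint : Integrable (fun z => ∑ i, (∫ x, g (khat z) x ∂μ i - ∫ x, g j x ∂μ i))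
      (Measure.pi μ)) :
    ∫ z, ∑ i, (∫ x, g (khat z) x ∂μ i - ∫ x, g j x ∂μ i) ∂Measure.pi μ ≤
      ∫ z, uniformDeviation μ g z ∂Measure.pi μ := by
  have : Nonempty κ := ⟨j⟩
  have hdev := integrable_uniformDeviation (μ := μ) hg hC
  have hj (i : ι) : Integrable (g j) (μ i) :=
    .of_bound (hg j).aestronglyMeasurable C (.of_forall (hC j))
  have hsum : Integrable (fun z => ∑ i, g j (z i)) (Measure.pi μ) :=
    integrable_finsetSum _ fun i _ => integrable_comp_eval (hj i)
  have hcentered : Integrable (fun z => ∑ i, g j (z i) - ∑ i, ∫ x, g j x ∂μ i) (Measure.pi μ) :=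
    hsum.sub (integrable_const _)
  calc ∫ z, ∑ i, (∫ x, g (khat z) x ∂μ i - ∫ x, g j x ∂μ i) ∂Measure.pi μ
      ≤ ∫ z, (uniformDeviation μ g z + (∑ i, g j (z i) - ∑ i, ∫ x, g j x ∂μ i)) ∂Measure.pi μ :=
        integral_mono hint (hdev.add hcentered) fun z =>
          sum_excess_le_uniformDeviation_add hC (hkhat z)
    _ = ∫ z, uniformDeviation μ g z ∂Measure.pi μ := by
        rw [integral_add hdev hcentered, integral_sub hsum (integrable_const _),
          integral_sum_comp_eval hj]
        simp

end EmpiricalRiskMinimization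

section ZeroOneLoss

variable {X Y : Type*}

/-- The zero-one loss `1{f x ≠ y}` of a classifier `f` at the labelled point `(x, y)`. -/
def zeroOneLoss (f : X → Y) : X × Y → ℝ := {p | f p.1 ≠ p.2}.indicator 1

lemma abs_zeroOneLoss_le_one (f : X → Y) (p : X × Y) : |zeroOneLoss f p| ≤ 1 := by
  by_cases h : f p.1 = p.2 <;> simp [zeroOneLoss, h]

lemma sum_zeroOneLoss [DecidableEq Y] {ι : Type*} [Fintype ι] (f : X → Y) (z : ι → X × Y) :
    ∑ i, zeroOneLoss f (z i) = (Finset.univ.filter fun i => f (z i).1 ≠ (z i).2).card := by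
  simp only [zeroOneLoss, Set.indicator_apply, Set.mem_ofPred_eq, Pi.one_apply,
    Finset.natCast_card_filter]

variable [MeasurableSpace X] [MeasurableSpace Y] [MeasurableEq Y]

lemma measurableSet_misclassified {f : X → Y} (hf : Measurable f) :
    MeasurableSet {p : X × Y | f p.1 ≠ p.2} :=
  (measurableSet_eq_fun (hf.comp measurable_fst) measurable_snd).compl

lemma measurable_zeroOneLoss {f : X → Y} (hf : Measurable f) : Measurable (zeroOneLoss f) :=
  measurable_one.indicator (measurableSet_misclassified hf)

lemma integral_zeroOneLoss {f : X → Y} (hf : Measurable f) (P : Measure (X × Y)) :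
    ∫ p, zeroOneLoss f p ∂P = (P {p | f p.1 ≠ p.2}).toReal :=
  integral_indicator_one (measurableSet_misclassified hf)

lemma integrable_risk {Ω : Type*} [MeasurableSpace Ω] {ν : Measure Ω} [IsFiniteMeasure ν]
    {P : Measure (X × Y)} [IsFiniteMeasure P] {f : Ω → X → Y}
    (hf : Measurable fun q : Ω × X => f q.1 q.2) :
    Integrable (fun ω => (P {p | f ω p.1 ≠ p.2}).toReal) ν := by
  have hset : MeasurableSet {q : Ω × X × Y | f q.1 q.2.1 ≠ q.2.2} :=
    (measurableSet_eq_fun (hf.comp (measurable_fst.prodMk measurable_snd.fst))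
      measurable_snd.snd).compl
  refine .of_bound (measurable_measure_prodMk_left hset).ennreal_toReal.aestronglyMeasurable
    (P.real Set.univ) (.of_forall fun ω => ?_)
  simpa [Measure.real] using measureReal_mono (μ := P) (Set.subset_univ {p | f ω p.1 ≠ p.2})

end ZeroOneLoss

section Shatter

variable {X : Type*} {K n : ℕ} {F : Set (X → Fin K)}

lemma card_restrictions_le_shatterCoeff (F : Set (X → Fin K)) (xs : Fin n → X) :
    Nat.card {v : Fin n → Fin K // ∃ f ∈ F, ∀ i, f (xs i) = v i} ≤ shatterCoeff F n := by
  refine le_csSup ⟨Nat.card (Fin n → Fin K), ?_⟩ ⟨xs, rfl⟩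
  rintro m ⟨ys, rfl⟩
  exact Nat.card_le_card_of_injective _ Subtype.val_injective

lemma range_sampleValues_zeroOneLoss (F : Set (X → Fin K)) (z : Fin n → X × Fin K) :
    Set.range (sampleValues (fun f : F => zeroOneLoss f.1) z) =
      (fun v i => zeroOneLoss id (v i, (z i).2)) ''
        {v : Fin n → Fin K | ∃ f ∈ F, ∀ i, f (z i).1 = v i} := by
  have : {v : Fin n → Fin K | ∃ f ∈ F, ∀ i, f (z i).1 = v i} =
      Set.range fun (f : F) i => f.1 (z i).1 := by
    ext v
    simp [funext_iff]
  rw [this, ← Set.range_comp]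
  rfl

lemma finite_range_sampleValues_zeroOneLoss (F : Set (X → Fin K)) (z : Fin n → X × Fin K) :
    (Set.range (sampleValues (fun f : F => zeroOneLoss f.1) z)).Finite := by
  rw [range_sampleValues_zeroOneLoss]
  exact (Set.toFinite _).image _

lemma ncard_range_sampleValues_zeroOneLoss_le (F : Set (X → Fin K)) (z : Fin n → X × Fin K) :
    (Set.range (sampleValues (fun f : F => zeroOneLoss f.1) z)).ncard ≤ shatterCoeff F n := by
  rw [range_sampleValues_zeroOneLoss]
  exact (Set.ncard_image_le (Set.toFinite _)).trans
    (card_restrictions_le_shatterCoeff F fun i => (z i).1)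

lemma rademacherAverage_zeroOneLoss_le (hF : F.Nonempty) (z : Fin n → X × Fin K) :
    rademacherAverage (sampleValues (fun f : F => zeroOneLoss f.1) z) ≤
      √(2 * n * Real.log (shatterCoeff F n)) := by
  have : Nonempty F := hF.to_subtype
  have hfin := finite_range_sampleValues_zeroOneLoss F z
  have norm_sq_le (f : F) :
      ∑ i, sampleValues (fun f : F => zeroOneLoss f.1) z f i ^ 2 ≤ n := by
    calc ∑ i, sampleValues (fun f : F => zeroOneLoss f.1) z f i ^ 2 ≤ ∑ _i : Fin n, (1 : ℝ) :=
          Finset.sum_le_sum fun i _ =>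
            (sq_le_one_iff_abs_le_one _).2 (abs_zeroOneLoss_le_one f.1 (z i))
      _ = n := by simp
  refine (rademacherAverage_le_sqrt hfin norm_sq_le).trans ?_
  gcongr
  · exact_mod_cast (Set.ncard_pos hfin).2 (Set.range_nonempty _)
  · exact ncard_range_sampleValues_zeroOneLoss_le F z

variable [MeasurableSpace X] {P : Measure (X × Fin K)} [IsProbabilityMeasure P]

lemma integral_uniformDeviation_zeroOneLoss_le (hF : F.Nonempty) (hFc : F.Countable)
    (hFm : ∀ f ∈ F, Measurable f) :
    ∫ z, uniformDeviation (fun _ : Fin n => P) (fun f : F => zeroOneLoss f.1) z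
        ∂(Measure.pi fun _ => P) ≤
      2 * √(2 * n * Real.log (shatterCoeff F n)) := by
  have : Nonempty F := hF.to_subtype
  have : Countable F := hFc.to_subtype
  calc ∫ z, uniformDeviation (fun _ : Fin n => P) (fun f : F => zeroOneLoss f.1) z
        ∂(Measure.pi fun _ => P)
      ≤ 2 * ∫ z : Fin n → X × Fin K, rademacherAverage
          (sampleValues (fun f : F => zeroOneLoss f.1) z) ∂(Measure.pi fun _ => P) :=
        integral_uniformDeviation_le_two_mul_integral_rademacherAverage
          (fun f => measurable_zeroOneLoss (hFm f.1 f.2)) fun f => abs_zeroOneLoss_le_one f.1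
    _ ≤ 2 * √(2 * n * Real.log (shatterCoeff F n)) := by
        have hint := integrable_rademacherAverage (μ := fun _ : Fin n => P)
          (fun f : F => measurable_zeroOneLoss (hFm f.1 f.2)) fun f => abs_zeroOneLoss_le_one f.1
        gcongr
        simpa using integral_mono hint (integrable_const _) (rademacherAverage_zeroOneLoss_le hF)

end Shatter

lemma log_natCast_le_log_mul {c : ℝ} (hc : 1 ≤ c) (m : ℕ) : Real.log m ≤ Real.log (c * m) := by
  rcases m.eq_zero_or_pos with rfl | hm
  · simp
  · have : (0 : ℝ) < m := by exact_mod_cast hm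
    exact Real.log_le_log this (le_mul_of_one_le_left this.le hc)

lemma two_mul_sqrt_eq_mul_four_mul_sqrt_div {x : ℝ} (hx : 0 < x) (y : ℝ) :
    2 * √(2 * x * y) = x * (4 * √(y / (2 * x))) := by
  rw [show 2 * x * y = (2 * x) ^ 2 * (y / (2 * x)) by field_simp,
    Real.sqrt_mul (by positivity), Real.sqrt_sq (by positivity)]
  ring

theorem erm_expected_excess_risk_general {X : Type*} [MeasurableSpace X] {K n : ℕ} (hn : 1 ≤ n)
    {F : Set (X → Fin K)} (hFc : F.Countable) (hFm : ∀ f ∈ F, Measurable f)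
    {P : Measure (X × Fin K)} [IsProbabilityMeasure P] {f0 : X → Fin K} (hf0 : f0 ∈ F)
    {fhat : (Fin n → X × Fin K) → X → Fin K} (hmem : ∀ z, fhat z ∈ F)
    (hERM : ∀ z, (Finset.univ.filter fun i => fhat z (z i).1 ≠ (z i).2).card ≤
      (Finset.univ.filter fun i => f0 (z i).1 ≠ (z i).2).card)
    (hfhat : Measurable fun p : (Fin n → X × Fin K) × X => fhat p.1 p.2) :
    ∫ z, ((P {p | fhat z p.1 ≠ p.2}).toReal - (P {p | f0 p.1 ≠ p.2}).toReal)
        ∂(Measure.pi fun _ : Fin n => P) ≤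
      4 * √(Real.log (shatterCoeff F n) / (2 * n)) := by
  have : Countable F := hFc.to_subtype
  have n_pos : (0 : ℝ) < n := by exact_mod_cast hn
  set excess := fun z => (P {p | fhat z p.1 ≠ p.2}).toReal - (P {p | f0 p.1 ≠ p.2}).toReal
  have hexcess : Integrable excess (Measure.pi fun _ : Fin n => P) :=
    (integrable_risk hfhat).sub (integrable_const _)
  have sum_excess (z : Fin n → X × Fin K) :
      ∑ _i : Fin n, (∫ p, zeroOneLoss (fhat z) p ∂P - ∫ p, zeroOneLoss f0 p ∂P) =
        n * excess z := by
    simp [excess, integral_zeroOneLoss (hFm _ (hmem z)), integral_zeroOneLoss (hFm _ hf0), mul_sub]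
  have excess_le_deviation := integral_sum_excess_le_integral_uniformDeviation
    (μ := fun _ : Fin n => P) (j := (⟨f0, hf0⟩ : F)) (khat := fun z => ⟨fhat z, hmem z⟩)
    (fun f : F => measurable_zeroOneLoss (hFm f.1 f.2)) (fun f => abs_zeroOneLoss_le_one f.1)
    (fun z => by simpa only [sum_zeroOneLoss, Nat.cast_le] using hERM z)
    (by simpa only [sum_excess] using hexcess.const_mul (n : ℝ))
  refine le_of_mul_le_mul_left ?_ n_pos
  rw [← integral_const_mul, ← two_mul_sqrt_eq_mul_four_mul_sqrt_div n_pos]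
  simpa only [sum_excess] using
    excess_le_deviation.trans (integral_uniformDeviation_zeroOneLoss_le ⟨f0, hf0⟩ hFc hFm)

/-- Expected excess risk of empirical risk minimization, bounded via the multiclass
shatter coefficient: `E[R(f̂) - R(f°)] ≤ 16 √(log(8e S(F, n)) / (2n))`. -/
theorem erm_expected_excess_risk
    {X : Type*} [MeasurableSpace X] (K n : ℕ) (hK : 2 ≤ K) (hn : 1 ≤ n)
    (F : Set (X → Fin K)) (hFc : F.Countable) (hFm : ∀ f ∈ F, Measurable f)
    (P : Measure (X × Fin K)) [IsProbabilityMeasure P]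
    (f0 : X → Fin K) (hf0 : f0 ∈ F)
    (hf0opt : ∀ f ∈ F,
      (P {p : X × Fin K | f0 p.1 ≠ p.2}).toReal ≤ (P {p : X × Fin K | f p.1 ≠ p.2}).toReal)
    (fhat : (Fin n → X × Fin K) → X → Fin K)
    (hmem : ∀ z, fhat z ∈ F)
    (hERM : ∀ z, ∀ f ∈ F,
      (Finset.univ.filter fun i => fhat z (z i).1 ≠ (z i).2).card ≤
        (Finset.univ.filter fun i => f (z i).1 ≠ (z i).2).card)
    (hfhat : Measurable fun p : (Fin n → X × Fin K) × X => fhat p.1 p.2) :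
    (∫ z, ((P {p : X × Fin K | fhat z p.1 ≠ p.2}).toReal -
            (P {p : X × Fin K | f0 p.1 ≠ p.2}).toReal)
        ∂(Measure.pi fun _ : Fin n => P)) ≤
      16 * Real.sqrt (Real.log (8 * Real.exp 1 * (shatterCoeff F n : ℝ)) / (2 * n)) := by
  refine (erm_expected_excess_risk_general hn hFc hFm hf0 hmem (fun z => hERM z f0 hf0)
    hfhat).trans ?_
  gcongr ?_ * √(?_ / _)
  · norm_num
  · exact log_natCast_le_log_mul (one_le_mul_of_one_le_of_one_le (by norm_num)
      (Real.one_le_exp zero_le_one)) _
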